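/- arXiv:0901.3646 — 2 statements merged into one kernel-verified Lean document; each statement's English description precedes it below -/
import Mathlib

section
/- Let A be a C*-algebra in which the spectrum of every self-adjoint element is finite. Then for every nonzero projection P in A there exist a maximal projection P_max and a minimal projection P₁ in A such that P₁ ≤ P ≤ P_max. -/
/-- A nonzero eigenvalue of left multiplication by `a` lies in the quasispectrum of `a`. -/
theorem mem_quasispectrum_of_mul_eq_smul {R A : Type*} [Field R] [NonUnitalRing A]
    [Module R A] [IsScalarTower R A A] {a e : A} {r : R}
    (he : e ≠ 0) (hae : a * e = r • e) : r ∈ quasispectrum R a := by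
  intro hr hq
  obtain ⟨y, -, hy⟩ := isQuasiregular_iff.mp hq
  have hr0 : r ≠ 0 := hr.ne_zero
  have hxe : -(hr.unit⁻¹ • a) * e = -e := by
    rw [neg_mul, Units.smul_def, smul_mul_assoc, hae, smul_smul]
    simp [hr0]
  have hzero := congr($hy * e)
  rw [add_mul, add_mul, mul_assoc, hxe] at hzero
  exact he (by simpa using hzero)

/-- A C⋆-algebra whose self-adjoint elements all have finite quasispectrum contains no infinite
sequence of nonzero pairwise orthogonal projections. -/
theorem not_pairwise_mul_eq_zero_of_finite_quasispectrum {A : Type*} [NonUnitalCStarAlgebra A]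
    (h : ∀ a : A, IsSelfAdjoint a → (quasispectrum ℂ a).Finite)
    {e : ℕ → A} (he : ∀ n, IsStarProjection (e n)) (he0 : ∀ n, e n ≠ 0) :
    ¬ Pairwise fun m n ↦ e m * e n = 0 := by
  intro horth
  let c : ℕ → ℝ := fun n ↦ (1 / 2) ^ n
  have hsum : Summable fun n ↦ c n • e n := by
    refine Summable.of_norm_bounded summable_geometric_two fun n ↦ ?_
    rw [norm_smul, Real.norm_of_nonneg (by positivity)]
    exact mul_le_of_le_one_right (by positivity) (IsStarProjection.norm_le _ (he n))
  have hsa : IsSelfAdjoint (∑' n, c n • e n) := by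
    rw [IsSelfAdjoint, tsum_star]
    simp [(he _).isSelfAdjoint.star_eq]
  have hmul (n : ℕ) : (∑' k, c k • e k) * e n = (c n : ℂ) • e n := by
    rw [← hsum.tsum_mul_right,
      tsum_eq_single n fun k hk ↦ by rw [smul_mul_assoc, horth hk, smul_zero],
      smul_mul_assoc, (he n).isIdempotentElem.eq, Complex.coe_smul]
  have hc : Function.Injective fun n ↦ (c n : ℂ) :=
    Complex.ofReal_injective.comp
      (pow_right_strictAnti₀ (by norm_num) (by norm_num : (1 / 2 : ℝ) < 1)).injective
  exact Set.infinite_of_injective_forall_mem hc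
    (fun n ↦ mem_quasispectrum_of_mul_eq_smul (he0 n) (hmul n)) (h _ hsa)

section Order

variable {A : Type*} [NonUnitalCStarAlgebra A] [PartialOrder A] [StarOrderedRing A]

/-- Differences over successive intervals in a chain of projections are orthogonal. -/
theorem IsStarProjection.sub_mul_sub_eq_zero {p q r s : A}
    (hp : IsStarProjection p) (hq : IsStarProjection q) (hr : IsStarProjection r)
    (hs : IsStarProjection s) (hpq : p ≤ q) (hqr : q ≤ r) (hrs : r ≤ s) :
    (q - p) * (s - r) = 0 ∧ (s - r) * (q - p) = 0 := by
  constructor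
  · rw [sub_mul, mul_sub, mul_sub, (hq.le_iff_mul_eq_left hs).mp (hqr.trans hrs),
      (hq.le_iff_mul_eq_left hr).mp hqr, (hp.le_iff_mul_eq_left hs).mp (hpq.trans (hqr.trans hrs)),
      (hp.le_iff_mul_eq_left hr).mp (hpq.trans hqr), sub_self, sub_self, sub_self]
  · rw [sub_mul, mul_sub, mul_sub, (hq.le_iff_mul_eq_right hs).mp (hqr.trans hrs),
      (hq.le_iff_mul_eq_right hr).mp hqr,
      (hp.le_iff_mul_eq_right hs).mp (hpq.trans (hqr.trans hrs)),
      (hp.le_iff_mul_eq_right hr).mp (hpq.trans hqr), sub_self]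

theorem IsStarProjection.wellFoundedLT_of_finite_quasispectrum
    (h : ∀ a : A, IsSelfAdjoint a → (quasispectrum ℂ a).Finite) :
    WellFoundedLT {p : A // IsStarProjection p} := by
  rw [WellFoundedLT, isWellFounded_iff, wellFounded_iff_isEmpty_descending_chain]
  refine ⟨fun ⟨f, hf⟩ ↦ ?_⟩
  have hanti : Antitone f := antitone_nat_of_succ_le fun n ↦ (hf n).le
  refine not_pairwise_mul_eq_zero_of_finite_quasispectrum h
    (e := fun n ↦ (f n : A) - f (n + 1))
    (fun n ↦ ((f (n + 1)).2.le_iff_sub (f n).2).mp (hf n).le)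
    (fun n ↦ sub_ne_zero.mpr fun hn ↦ (hf n).ne' (Subtype.ext hn)) fun m n hmn ↦ ?_
  rcases hmn.lt_or_gt with hlt | hlt
  · exact ((f (n + 1)).2.sub_mul_sub_eq_zero (f n).2 (f (m + 1)).2 (f m).2
      (hf n).le (hanti hlt) (hf m).le).2
  · exact ((f (m + 1)).2.sub_mul_sub_eq_zero (f m).2 (f (n + 1)).2 (f n).2
      (hf m).le (hanti hlt) (hf n).le).1

theorem IsStarProjection.wellFoundedGT_of_finite_quasispectrum
    (h : ∀ a : A, IsSelfAdjoint a → (quasispectrum ℂ a).Finite) :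
    WellFoundedGT {p : A // IsStarProjection p} := by
  rw [WellFoundedGT, isWellFounded_iff, wellFounded_iff_isEmpty_descending_chain]
  refine ⟨fun ⟨f, hf⟩ ↦ ?_⟩
  have hmono : Monotone f := monotone_nat_of_le_succ fun n ↦ (hf n).le
  refine not_pairwise_mul_eq_zero_of_finite_quasispectrum h
    (e := fun n ↦ (f (n + 1) : A) - f n)
    (fun n ↦ ((f n).2.le_iff_sub (f (n + 1)).2).mp (hf n).le)
    (fun n ↦ sub_ne_zero.mpr fun hn ↦ (hf n).ne' (Subtype.ext hn)) fun m n hmn ↦ ?_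
  rcases hmn.lt_or_gt with hlt | hlt
  · exact ((f m).2.sub_mul_sub_eq_zero (f (m + 1)).2 (f n).2 (f (n + 1)).2
      (hf m).le (hmono hlt) (hf n).le).1
  · exact ((f n).2.sub_mul_sub_eq_zero (f (n + 1)).2 (f m).2 (f (m + 1)).2
      (hf n).le (hmono hlt) (hf m).le).2

end Order

/-- In a C*-algebra in which every self-adjoint element has finite spectrum (in the
unitization), every nonzero projection `P` lies between a minimal projection `P₁` and a
maximal projection `P_max` for the order `P ≤ Q ↔ PQ = QP = P`. -/
theorem exists_minimal_and_maximal_projection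
    {A : Type*} [NonUnitalCStarAlgebra A]
    (h : ∀ a : A, IsSelfAdjoint a → (quasispectrum ℂ a).Finite)
    (P : A) (hP : IsSelfAdjoint P ∧ P * P = P) (hP0 : P ≠ 0) :
    ∃ Pmax P₁ : A,
      (IsSelfAdjoint Pmax ∧ Pmax * Pmax = Pmax) ∧
      (IsSelfAdjoint P₁ ∧ P₁ * P₁ = P₁) ∧ P₁ ≠ 0 ∧
      -- `P₁` is minimal
      (∀ Q : A, (IsSelfAdjoint Q ∧ Q * Q = Q) → Q ≠ 0 →
        (Q * P₁ = Q ∧ P₁ * Q = Q) → Q = P₁) ∧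
      -- `Pmax` is maximal
      (∀ Q : A, (IsSelfAdjoint Q ∧ Q * Q = Q) →
        (Pmax * Q = Pmax ∧ Q * Pmax = Pmax) → Q = Pmax) ∧
      -- `P₁ ≤ P ≤ Pmax`
      (P₁ * P = P₁ ∧ P * P₁ = P₁) ∧ (P * Pmax = P ∧ Pmax * P = P) := by
  let : PartialOrder A := CStarAlgebra.spectralOrder A
  have : StarOrderedRing A := CStarAlgebra.spectralOrderedRing A
  have := IsStarProjection.wellFoundedLT_of_finite_quasispectrum h
  have := IsStarProjection.wellFoundedGT_of_finite_quasispectrum h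
  let p : {p : A // IsStarProjection p} := ⟨P, hP.2, hP.1⟩
  have mul_eq {q r : {p : A // IsStarProjection p}} (hqr : q ≤ r) :
      (q : A) * r = q ∧ (r : A) * q = q :=
    ⟨(q.2.le_iff_mul_eq_left r.2).mp hqr, (q.2.le_iff_mul_eq_right r.2).mp hqr⟩
  obtain ⟨q, hqp, hq⟩ := exists_minimal_le_of_wellFoundedLT
    (fun q : {p : A // IsStarProjection p} ↦ (q : A) ≠ 0) p hP0
  obtain ⟨r, hpr, hr⟩ := exists_maximal_ge_of_wellFoundedGT
    (fun _ : {p : A // IsStarProjection p} ↦ True) p trivial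
  refine ⟨r, q, ⟨r.2.isSelfAdjoint, r.2.isIdempotentElem⟩,
    ⟨q.2.isSelfAdjoint, q.2.isIdempotentElem⟩, hq.prop, fun Q hQ hQ0 hle ↦ ?_,
    fun Q hQ hle ↦ ?_, mul_eq hqp, mul_eq hpr⟩
  · have hQ' : IsStarProjection Q := ⟨hQ.2, hQ.1⟩
    have hQq : Q ≤ q := (hQ'.le_iff_mul_eq_left q.2).mpr hle.1
    exact le_antisymm hQq (hq.le_of_le (y := ⟨Q, hQ'⟩) hQ0 hQq)
  · have hQ' : IsStarProjection Q := ⟨hQ.2, hQ.1⟩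
    have hrQ : r ≤ Q := (r.2.le_iff_mul_eq_left hQ').mpr hle.1
    exact le_antisymm (hr.le_of_ge (y := ⟨Q, hQ'⟩) trivial hrQ) hrQ
end

section
/- If A is a C*-algebra (A ≠ {0}) in which the spectrum of every self-adjoint element is finite, then A is unital: A possesses a multiplicative identity element. -/
/-- A nonzero eigenvalue of left multiplication by `a` lies in the quasispectrum of `a`. -/
theorem mem_quasispectrum_of_mul_eq_smul_s14 {𝕜 A : Type*} [Field 𝕜] [NonUnitalRing A] [Module 𝕜 A]
    [IsScalarTower 𝕜 A A] {a q : A} {μ : 𝕜} (hμ : μ ≠ 0) (hq : q ≠ 0)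
    (haq : a * q = μ • q) : μ ∈ quasispectrum 𝕜 a := by
  refine quasispectrum.mem_of_not_quasiregular a (r := Units.mk0 μ hμ) fun hreg ↦ hq ?_
  obtain ⟨y, -, hy⟩ := isQuasiregular_iff.mp hreg
  have hxq : -((Units.mk0 μ hμ)⁻¹ • a) * q = -q := by
    rw [neg_mul, Units.smul_def, smul_mul_assoc, haq, Units.val_inv_eq_inv_val, Units.val_mk0,
      inv_smul_smul₀ hμ]
  have hyq := congr($hy * q)
  rw [add_mul, add_mul, mul_assoc, hxq, zero_mul, mul_neg] at hyq
  simpa using hyq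

/-- A self-adjoint element `b` with finite quasispectrum has a support projection, which moreover
lies in the right ideal generated by `b`. -/
theorem IsSelfAdjoint.exists_isStarProjection_of_finite_quasispectrum {A : Type*}
    [NonUnitalCStarAlgebra A] {b : A} (hb : IsSelfAdjoint b) (hfin : (quasispectrum ℂ b).Finite) :
    ∃ p : A, IsStarProjection p ∧ p * b = b ∧ ∃ c : A, p = b * c := by
  classical
  have hcont (f : ℂ → ℂ) : ContinuousOn f (quasispectrum ℂ b) := hfin.continuousOn f
  have hnormal : IsStarNormal b := hb.isStarNormal
  let f : ℂ → ℂ := fun x ↦ if x = 0 then 0 else 1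
  have hf0 : f 0 = 0 := by simp [f]
  refine ⟨cfcₙ f b, ⟨?_, ?_⟩, ?_, cfcₙ (fun x : ℂ ↦ x⁻¹) b, ?_⟩
  · rw [IsIdempotentElem, ← cfcₙ_mul f f b (hcont _) hf0 (hcont _) hf0]
    congr 1
    ext x
    simp [f]
  · rw [IsSelfAdjoint, ← cfcₙ_star]
    congr 1
    ext x
    by_cases hx : x = 0 <;> simp [f, hx]
  · nth_rw 2 [← cfcₙ_id' ℂ b]
    rw [← cfcₙ_mul f (fun x ↦ x) b (hcont _) hf0 (hcont _) rfl]
    conv_rhs => rw [← cfcₙ_id' ℂ b]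
    congr 1
    ext x
    by_cases hx : x = 0 <;> simp [f, hx]
  · nth_rw 2 [← cfcₙ_id' ℂ b]
    rw [← cfcₙ_mul (fun x ↦ x) (fun x ↦ x⁻¹) b (hcont _) rfl (hcont _) inv_zero]
    congr 1
    ext x
    by_cases hx : x = 0 <;> simp [f, hx]

/-- If self-adjoint elements have finite quasispectrum, then a projection which is not an identity
is orthogonal to some nonzero projection. -/
theorem IsStarProjection.exists_orthogonal_of_not_identity {A : Type*} [NonUnitalCStarAlgebra A]
    (h : ∀ a : A, IsSelfAdjoint a → (quasispectrum ℂ a).Finite) {e : A} (he : IsStarProjection e)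
    (hne : ¬ ∀ a : A, e * a = a ∧ a * e = a) :
    ∃ q : A, IsStarProjection q ∧ q ≠ 0 ∧ e * q = 0 := by
  obtain ⟨a, ha⟩ : ∃ a : A, e * a ≠ a := by
    by_contra! hleft
    refine hne fun a ↦ ⟨hleft a, ?_⟩
    simpa [he.isSelfAdjoint.star_eq] using congr(star $(hleft (star a)))
  have hc : a - e * a ≠ 0 := sub_ne_zero.mpr ha.symm
  have hec : e * (a - e * a) = 0 := by
    rw [mul_sub, ← mul_assoc, he.isIdempotentElem.eq, sub_self]
  set c := a - e * a
  have hb : IsSelfAdjoint (c * star c) := .mul_star_self c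
  obtain ⟨q, hq, hqb, d, hqd⟩ := hb.exists_isStarProjection_of_finite_quasispectrum (h _ hb)
  refine ⟨q, hq, ?_, ?_⟩
  · rintro rfl
    rw [zero_mul] at hqb
    exact hc (CStarRing.mul_star_self_eq_zero_iff c |>.mp hqb.symm)
  · rw [hqd, ← mul_assoc, ← mul_assoc, hec, zero_mul, zero_mul]

/-- If every projection is orthogonal to some nonzero projection, then there is a sequence of
nonzero pairwise orthogonal projections. -/
theorem exists_seq_orthogonal_isStarProjection {A : Type*} [NonUnitalRing A] [StarRing A]
    (h : ∀ e : A, IsStarProjection e → ∃ q : A, IsStarProjection q ∧ q ≠ 0 ∧ e * q = 0) :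
    ∃ p : ℕ → A, (∀ n, IsStarProjection (p n) ∧ p n ≠ 0) ∧
      Pairwise fun m n ↦ p m * p n = 0 := by
  choose! q hq hq0 heq using h
  have hqe {e : A} (he : IsStarProjection e) : q e * e = 0 := by
    simpa [he.isSelfAdjoint.star_eq, (hq e he).isSelfAdjoint.star_eq] using congr(star $(heq e he))
  let e : ℕ → A := fun n ↦ Nat.rec 0 (fun _ x ↦ x + q x) n
  have he_succ (n : ℕ) : e (n + 1) = e n + q (e n) := rfl
  have he (n : ℕ) : IsStarProjection (e n) := by
    induction n with
    | zero => exact .zero A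
    | succ n ih =>
      rw [he_succ]
      refine ⟨?_, ih.isSelfAdjoint.add (hq _ ih).isSelfAdjoint⟩
      rw [IsIdempotentElem, mul_add, add_mul, add_mul, ih.isIdempotentElem.eq,
        (hq _ ih).isIdempotentElem.eq, heq _ ih, hqe ih, add_zero, zero_add]
  have hle {m n : ℕ} (hmn : m < n) : q (e m) * e n = q (e m) := by
    induction n, hmn using Nat.le_induction with
    | base => rw [he_succ, mul_add, hqe (he m), (hq _ (he m)).isIdempotentElem.eq, zero_add]
    | succ n _ ih =>
      have : q (e m) * q (e n) = 0 := by rw [← ih, mul_assoc, heq _ (he n), mul_zero]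
      rw [he_succ, mul_add, ih, this, add_zero]
  have hlt {m n : ℕ} (hmn : m < n) : q (e m) * q (e n) = 0 := by
    rw [← hle hmn, mul_assoc, heq _ (he n), mul_zero]
  refine ⟨fun n ↦ q (e n), fun n ↦ ⟨hq _ (he n), hq0 _ (he n)⟩, fun m n hmn ↦ ?_⟩
  rcases hmn.lt_or_gt with hmn | hmn
  · exact hlt hmn
  · simpa [(hq _ (he m)).isSelfAdjoint.star_eq, (hq _ (he n)).isSelfAdjoint.star_eq]
      using congr(star $(hlt hmn))

/-- Given a sequence of nonzero pairwise orthogonal projections in a C⋆-algebra, some self-adjoint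
element has infinite quasispectrum. -/
theorem exists_isSelfAdjoint_infinite_quasispectrum {A : Type*} [NonUnitalCStarAlgebra A]
    {p : ℕ → A} (hp : ∀ n, IsStarProjection (p n) ∧ p n ≠ 0)
    (horth : Pairwise fun m n ↦ p m * p n = 0) :
    ∃ a : A, IsSelfAdjoint a ∧ (quasispectrum ℂ a).Infinite := by
  let f : ℕ → A := fun n ↦ ((1 / 2 : ℝ) ^ n) • p n
  have hf : Summable f := by
    refine Summable.of_norm_bounded summable_geometric_two fun n ↦ ?_
    rw [norm_smul, norm_pow, Real.norm_of_nonneg (by norm_num)]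
    exact mul_le_of_le_one_right (by positivity) (hp n).1.norm_le
  refine ⟨∑' n, f n, ?_, ?_⟩
  · rw [IsSelfAdjoint, tsum_star]
    congr 1
    ext n
    simp [f, (hp n).1.isSelfAdjoint.star_eq]
  · have hmul (n : ℕ) : (∑' k, f k) * p n = ((1 / 2 : ℂ) ^ n) • p n := by
      rw [← hf.tsum_mul_right, tsum_eq_single n fun k hk ↦ by
        simp only [f, smul_mul_assoc, horth hk, smul_zero]]
      simp only [f, smul_mul_assoc, (hp n).1.isIdempotentElem.eq]
      rw [← Complex.coe_smul]
      simp
    have hinj : Function.Injective fun n : ℕ ↦ (1 / 2 : ℂ) ^ n := fun m n hmn ↦ by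
      have := congr(‖$hmn‖)
      simpa using this
    refine (Set.infinite_range_of_injective hinj).mono ?_
    rintro _ ⟨n, rfl⟩
    exact mem_quasispectrum_of_mul_eq_smul_s14 (pow_ne_zero n (by norm_num)) (hp n).2 (hmul n)

/-- If `A` is a nonzero (not necessarily unital) C*-algebra in which the spectrum (in the
unitization) of every self-adjoint element is finite, then `A` has a multiplicative
identity. -/
theorem unital_of_selfAdjoint_spectra_finite
    {A : Type*} [NonUnitalCStarAlgebra A] [Nontrivial A]
    (h : ∀ a : A, IsSelfAdjoint a → (quasispectrum ℂ a).Finite) :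
    ∃ e : A, ∀ a : A, e * a = a ∧ a * e = a := by
  by_contra hunit
  obtain ⟨p, hp, horth⟩ := exists_seq_orthogonal_isStarProjection fun e he ↦
    IsStarProjection.exists_orthogonal_of_not_identity (A := A) h he fun h1 ↦ hunit ⟨e, h1⟩
  obtain ⟨a, ha, hinf⟩ := exists_isSelfAdjoint_infinite_quasispectrum hp horth
  exact hinf (h a ha)
end
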